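/- Let E be a nonempty finite set, V a finite-dimensional real normed vector space, 1 ≤ p < ∞, and q the conjugate exponent with (1/p) + (1/q) = 1. Then for every f : E → V, the weak norm ‖f‖_{p,ν} equals the supremum of ‖∑_{x ∈ E} h(x) f(x)‖_V over all real-valued functions h on E with ‖h‖_q ≤ 1. -/

import Mathlib

open scoped ENNReal

/-- The `ℓ^p` norm of a function on a nonempty finite set with values in a
normed vector space: for `p < ∞` it is `(∑ x, ‖f x‖ ^ p)^(1/p)`, and for
`p = ∞` it is `max {‖f x‖ : x ∈ E}`. -/
noncomputable def pNorm {E V : Type*} [Fintype E] [Nonempty E]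
    [NormedAddCommGroup V] (p : ℝ≥0∞) (f : E → V) : ℝ :=
  if p = ∞ then ⨆ x, ‖f x‖ else (∑ x, ‖f x‖ ^ p.toReal) ^ (1 / p.toReal)

/-!
For scalar-valued `a`, Hölder's inequality and its equality case say that `pNorm p a` is the maximum
of `‖∑ x, h x * a x‖` over the unit ball of `ℓ^q`. Taking `a = lam ∘ f`, the weak norm of `f` is the
supremum of `‖lam (∑ x, h x • f x)‖` over both unit balls at once, and by Hahn–Banach the supremum
over `lam` alone is `‖∑ x, h x • f x‖`.
-/

section PNorm

variable {E V W : Type*} [Fintype E] [Nonempty E] [NormedAddCommGroup V] [NormedAddCommGroup W]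

lemma pNorm_top (f : E → V) : pNorm ∞ f = ⨆ x, ‖f x‖ := if_pos rfl

lemma pNorm_of_ne_top {p : ℝ≥0∞} (hp : p ≠ ∞) (f : E → V) :
    pNorm p f = (∑ x, ‖f x‖ ^ p.toReal) ^ (1 / p.toReal) := if_neg hp

lemma pNorm_one (f : E → V) : pNorm 1 f = ∑ x, ‖f x‖ := by
  simp [pNorm_of_ne_top ENNReal.one_ne_top]

lemma pNorm_congr_norm (p : ℝ≥0∞) {f : E → V} {g : E → W} (h : ∀ x, ‖f x‖ = ‖g x‖) :
    pNorm p f = pNorm p g := by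
  simp only [pNorm, h]

lemma pNorm_nonneg (p : ℝ≥0∞) (f : E → V) : 0 ≤ pNorm p f := by
  unfold pNorm
  split_ifs
  · exact Real.iSup_nonneg fun x => norm_nonneg (f x)
  · positivity

lemma norm_le_pNorm_top (f : E → V) (x : E) : ‖f x‖ ≤ pNorm ∞ f :=
  (le_ciSup (Set.finite_range fun x => ‖f x‖).bddAbove x).trans_eq (pNorm_top f).symm

lemma sum_norm_mul_norm_le_pNorm_one_mul_pNorm_top (f : E → V) (g : E → W) :
    ∑ x, ‖f x‖ * ‖g x‖ ≤ pNorm 1 f * pNorm ∞ g := by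
  rw [pNorm_one, Finset.sum_mul]
  gcongr with x
  exact norm_le_pNorm_top g x

theorem sum_norm_mul_norm_le_pNorm_mul_pNorm (p q : ℝ≥0∞) [p.HolderConjugate q]
    (f : E → V) (g : E → W) : ∑ x, ‖f x‖ * ‖g x‖ ≤ pNorm p f * pNorm q g := by
  obtain rfl | hp := eq_or_ne p ∞
  · obtain rfl : q = 1 := (ENNReal.HolderConjugate.eq_top_iff_eq_one ∞ q).1 rfl
    simpa only [mul_comm] using sum_norm_mul_norm_le_pNorm_one_mul_pNorm_top g f
  obtain rfl | hq := eq_or_ne q ∞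
  · obtain rfl : p = 1 := (ENNReal.HolderConjugate.eq_top_iff_eq_one ∞ p).1 rfl
    exact sum_norm_mul_norm_le_pNorm_one_mul_pNorm_top f g
  rw [pNorm_of_ne_top hp, pNorm_of_ne_top hq]
  exact Real.inner_le_Lp_mul_Lq_of_nonneg Finset.univ
    (ENNReal.HolderConjugate.toReal_of_ne_top hp hq)
    (fun x _ => norm_nonneg (f x)) (fun x _ => norm_nonneg (g x))

theorem norm_sum_mul_le_pNorm_mul_pNorm {R : Type*} [NonUnitalNormedRing R] (p q : ℝ≥0∞)
    [p.HolderConjugate q] (f g : E → R) : ‖∑ x, f x * g x‖ ≤ pNorm p f * pNorm q g :=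
  calc ‖∑ x, f x * g x‖ ≤ ∑ x, ‖f x‖ * ‖g x‖ :=
        norm_sum_le_of_le _ fun x _ => norm_mul_le (f x) (g x)
    _ ≤ pNorm p f * pNorm q g := sum_norm_mul_norm_le_pNorm_mul_pNorm p q f g

lemma exists_pNorm_one_le_one_sum_mul_norm_eq_pNorm_top (f : E → V) :
    ∃ g : E → ℝ, pNorm 1 g ≤ 1 ∧ ∑ x, g x * ‖f x‖ = pNorm ∞ f := by
  classical
  obtain ⟨x₀, hx₀⟩ := exists_eq_ciSup_of_finite (f := fun x => ‖f x‖)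
  refine ⟨Pi.single x₀ 1, ?_, ?_⟩
  · simp [pNorm_one, Pi.single_apply, apply_ite]
  · simp [pNorm_top, ← hx₀, Pi.single_apply]

lemma exists_pNorm_top_le_one_sum_mul_norm_eq_pNorm_one (f : E → V) :
    ∃ g : E → ℝ, pNorm ∞ g ≤ 1 ∧ ∑ x, g x * ‖f x‖ = pNorm 1 f :=
  ⟨1, by simp [pNorm_top], by simp [pNorm_one]⟩

lemma exists_pNorm_le_one_sum_mul_norm_eq_pNorm_of_ne_top {p q : ℝ≥0∞} [p.HolderConjugate q]
    (hp : p ≠ ∞) (hq : q ≠ ∞) (f : E → V) :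
    ∃ g : E → ℝ, pNorm q g ≤ 1 ∧ ∑ x, g x * ‖f x‖ = pNorm p f := by
  have hpq := ENNReal.HolderConjugate.toReal_of_ne_top hp hq
  obtain ⟨g, hg, hfg⟩ := (NNReal.isGreatest_Lp Finset.univ (fun x => ‖f x‖₊) hpq).1
  refine ⟨fun x => g x, ?_, ?_⟩
  · have hg_real : ∑ x, (g x : ℝ) ^ q.toReal ≤ 1 := mod_cast hg
    simp only [pNorm_of_ne_top hq, NNReal.norm_eq]
    exact Real.rpow_le_one (by positivity) hg_real hpq.symm.one_div_nonneg
  · have hfg_real := congrArg NNReal.toReal hfg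
    push_cast at hfg_real
    simpa only [pNorm_of_ne_top hp, mul_comm] using hfg_real

theorem exists_pNorm_le_one_sum_mul_norm_eq_pNorm (p q : ℝ≥0∞) [p.HolderConjugate q] (f : E → V) :
    ∃ g : E → ℝ, pNorm q g ≤ 1 ∧ ∑ x, g x * ‖f x‖ = pNorm p f := by
  obtain rfl | hp := eq_or_ne p ∞
  · obtain rfl : q = 1 := (ENNReal.HolderConjugate.eq_top_iff_eq_one ∞ q).1 rfl
    exact exists_pNorm_one_le_one_sum_mul_norm_eq_pNorm_top f
  obtain rfl | hq := eq_or_ne q ∞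
  · obtain rfl : p = 1 := (ENNReal.HolderConjugate.eq_top_iff_eq_one ∞ p).1 rfl
    exact exists_pNorm_top_le_one_sum_mul_norm_eq_pNorm_one f
  exact exists_pNorm_le_one_sum_mul_norm_eq_pNorm_of_ne_top hp hq f

end PNorm

section Duality

variable {𝕜 E V : Type*} [RCLike 𝕜] [Fintype E] [Nonempty E]
  (p q : ℝ≥0∞) [p.HolderConjugate q]

theorem exists_pNorm_le_one_sum_mul_eq_pNorm (a : E → 𝕜) :
    ∃ h : E → 𝕜, pNorm q h ≤ 1 ∧ ∑ x, h x * a x = (pNorm p a : 𝕜) := by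
  obtain ⟨g, hg, hga⟩ := exists_pNorm_le_one_sum_mul_norm_eq_pNorm p q a
  choose c hc hca using fun x => RCLike.exists_norm_eq_mul_self (a x)
  refine ⟨fun x => g x * c x, ?_, ?_⟩
  · rwa [pNorm_congr_norm q (g := g) fun x => by simp [hc x]]
  · simp only [← hga, RCLike.ofReal_sum, RCLike.ofReal_mul, hca, mul_assoc]

variable [SeminormedAddCommGroup V] [NormedSpace 𝕜 V]

lemma exists_dual_norm_sum_smul_le_pNorm (f : E → V) {h : E → 𝕜} (hh : pNorm q h ≤ 1) :
    ∃ lam : StrongDual 𝕜 V, ‖lam‖ ≤ 1 ∧ ‖∑ x, h x • f x‖ ≤ pNorm p fun x => lam (f x) := by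
  obtain ⟨lam, hlam, hnorm⟩ := exists_dual_vector'' 𝕜 (∑ x, h x • f x)
  refine ⟨lam, hlam, ?_⟩
  calc ‖∑ x, h x • f x‖ = ‖lam (∑ x, h x • f x)‖ := by simp [hnorm]
    _ = ‖∑ x, h x * lam (f x)‖ := by simp only [map_sum, map_smul, smul_eq_mul]
    _ ≤ pNorm q h * pNorm p (fun x => lam (f x)) := norm_sum_mul_le_pNorm_mul_pNorm q p _ _
    _ ≤ pNorm p fun x => lam (f x) := mul_le_of_le_one_left (pNorm_nonneg p _) hh

lemma exists_pNorm_le_one_pNorm_dual_le_norm_sum_smul (f : E → V) {lam : StrongDual 𝕜 V}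
    (hlam : ‖lam‖ ≤ 1) :
    ∃ h : E → 𝕜, pNorm q h ≤ 1 ∧ (pNorm p fun x => lam (f x)) ≤ ‖∑ x, h x • f x‖ := by
  obtain ⟨h, hh, hsum⟩ := exists_pNorm_le_one_sum_mul_eq_pNorm p q fun x => lam (f x)
  refine ⟨h, hh, ?_⟩
  calc (pNorm p fun x => lam (f x)) = ‖∑ x, h x * lam (f x)‖ := by
        rw [hsum, RCLike.norm_of_nonneg (pNorm_nonneg p _)]
    _ = ‖lam (∑ x, h x • f x)‖ := by simp only [map_sum, map_smul, smul_eq_mul]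
    _ ≤ ‖∑ x, h x • f x‖ := by simpa only [one_mul] using lam.le_of_opNorm_le hlam _

end Duality

theorem stmt_11_general {𝕜 E V : Type*} [RCLike 𝕜] [Fintype E] [Nonempty E]
    [SeminormedAddCommGroup V] [NormedSpace 𝕜 V] (p q : ℝ≥0∞) [p.HolderConjugate q] (f : E → V) :
    sSup {r : ℝ | ∃ lam : StrongDual 𝕜 V, ‖lam‖ ≤ 1 ∧ r = pNorm p fun x => lam (f x)}
      = sSup {r : ℝ | ∃ h : E → 𝕜, pNorm q h ≤ 1 ∧ r = ‖∑ x, h x • f x‖} := by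
  apply csSup_eq_csSup_of_forall_exists_le
  · rintro _ ⟨lam, hlam, rfl⟩
    obtain ⟨h, hh, hle⟩ := exists_pNorm_le_one_pNorm_dual_le_norm_sum_smul p q f hlam
    exact ⟨_, ⟨h, hh, rfl⟩, hle⟩
  · rintro _ ⟨h, hh, rfl⟩
    obtain ⟨lam, hlam, hle⟩ := exists_dual_norm_sum_smul_le_pNorm p q f hh
    exact ⟨_, ⟨lam, hlam, rfl⟩, hle⟩

theorem stmt_11 {E V : Type*} [Fintype E] [Nonempty E]
    [NormedAddCommGroup V] [NormedSpace ℝ V] [FiniteDimensional ℝ V]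
    (p q : ℝ≥0∞) (hp : 1 ≤ p) (hp' : p ≠ ∞) (hpq : p⁻¹ + q⁻¹ = 1)
    (f : E → V) :
    sSup {r : ℝ | ∃ lam : V →L[ℝ] ℝ, ‖lam‖ ≤ 1 ∧
        r = (∑ x, |lam (f x)| ^ p.toReal) ^ (1 / p.toReal)}
      = sSup {r : ℝ | ∃ h : E → ℝ, pNorm q h ≤ 1 ∧
          r = ‖∑ x, h x • f x‖} := by
  have : p.HolderConjugate q := ENNReal.holderConjugate_iff.2 hpq
  simpa only [pNorm_of_ne_top hp', Real.norm_eq_abs] using stmt_11_general (𝕜 := ℝ) p q f
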